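/- Let Γ be a finite simple graph with no isolated vertices, and let g be an automorphism of Γ such that the cyclic group generated by g acts transitively on the edge set of Γ. Then for every connected component of Γ, the subgraph induced on that component is isomorphic to a single edge K_2, or to the cycle graph C_n for some n ≥ 3, or to the complete bipartite graph with parts Fin s and Fin t for some s, t with s·t > 1 and Nat.gcd s t = 1; moreover, the subgraphs induced on any two connected components of Γ are isomorphic to each other. -/

import Mathlib

/-- The cycle graph `C_n` on `ZMod n`: `i` and `j` are adjacent iff `j = i + 1` or `i = j + 1`. -/
def cycGraph (n : ℕ) : SimpleGraph (ZMod n) :=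
  SimpleGraph.fromRel (fun i j => j = i + 1)

open SimpleGraph

lemma aux_zpow {V : Type} (Γ : SimpleGraph V) (g : Γ ≃g Γ) (k : ℤ) (x : V) :
    (g ^ k) x = ((g.toEquiv : Equiv.Perm V) ^ k) x := by
  let F : (Γ ≃g Γ) →* Equiv.Perm V :=
    { toFun := fun h => h.toEquiv, map_one' := rfl, map_mul' := fun _ _ => rfl }
  have h := map_zpow F g k
  exact congrArg (fun q : Equiv.Perm V => q x) h

lemma aux_per {V : Type} (p : Equiv.Perm V) (u : V) (k l : ℤ) :
    (p ^ k) u = (p ^ l) u ↔ (Function.minimalPeriod p u : ℤ) ∣ k - l := by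
  have h := MulAction.zpow_smul_eq_iff_minimalPeriod_dvd (a := p) (b := u) (n := k - l)
  have e : (fun x : V => p • x) = p := rfl
  rw [e] at h
  rw [← h]
  have e2 : p ^ (k - l) • u = (p ^ (k - l)) u := rfl
  rw [e2, sub_eq_neg_add, zpow_add, Equiv.Perm.mul_apply, zpow_neg, Equiv.Perm.inv_eq_iff_eq]

lemma aux_iso {V W : Type} (Γ : SimpleGraph V) (G : SimpleGraph W) (φ : W → V)
    (hinj : Function.Injective φ) (hadj : ∀ a b, Γ.Adj (φ a) (φ b) ↔ G.Adj a b)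
    (hcl : ∀ a y, Γ.Adj (φ a) y → y ∈ Set.range φ) (c : Γ.ConnectedComponent)
    (w0 : W) (hw0 : φ w0 ∈ c.supp) (hr : ∀ w, Γ.Reachable (φ w0) (φ w)) :
    Nonempty (Γ.induce c.supp ≃g G) := by
  have hmem : ∀ w, φ w ∈ c.supp := by
    intro w
    rw [ConnectedComponent.mem_supp_iff] at hw0 ⊢
    rw [← hw0]
    exact (ConnectedComponent.sound (hr w)).symm
  have hsurj : ∀ x ∈ c.supp, x ∈ Set.range φ := by
    intro x hx
    rw [ConnectedComponent.mem_supp_iff] at hw0 hx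
    have hre : Γ.Reachable (φ w0) x := ConnectedComponent.exact (hw0.trans hx.symm)
    obtain ⟨q⟩ := hre
    have : ∀ (a b : V) (q : Γ.Walk a b), a ∈ Set.range φ → b ∈ Set.range φ := by
      intro a b q
      induction q with
      | nil => exact id
      | cons h _ ih =>
        rintro ⟨w, rfl⟩
        exact ih (hcl w _ h)
    exact this _ _ q ⟨w0, rfl⟩
  let ψ : W → c.supp := fun w => ⟨φ w, hmem w⟩
  have hb : Function.Bijective ψ := by
    constructor
    · intro a b h
      exact hinj (congrArg Subtype.val h)
    · rintro ⟨x, hx⟩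
      obtain ⟨w, rfl⟩ := hsurj x hx
      exact ⟨w, rfl⟩
  exact ⟨(⟨Equiv.ofBijective ψ hb, fun {a b} => hadj a b⟩ : G ≃g Γ.induce c.supp).symm⟩

/-- Vertex-transitive case. -/
lemma aux_cyc {V : Type} [Fintype V] (Γ : SimpleGraph V) (f : Equiv.Perm V)
    (hA : ∀ x y, Γ.Adj x y ↔ y = f x ∨ x = f y) (c : Γ.ConnectedComponent) :
    ∃ n : ℕ, 2 ≤ n ∧ Nonempty (Γ.induce c.supp ≃g cycGraph n) := by
  obtain ⟨u, hu⟩ := c.nonempty_supp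
  have hne : f u ≠ u := by
    intro h
    exact Γ.loopless.irrefl u ((hA u u).2 (Or.inl h.symm))
  set n := Function.minimalPeriod f u with hn
  have hpos : 0 < n := Function.minimalPeriod_pos_of_mem_periodicPts
    (Function.Injective.mem_periodicPts f.injective u)
  have hn1 : n ≠ 1 := by
    intro h
    rw [hn, Function.minimalPeriod_eq_one_iff_isFixedPt] at h
    exact hne h
  have hn2 : 2 ≤ n := by omega
  have : NeZero n := ⟨by omega⟩
  have hper : ∀ k l : ℤ, (f ^ k) u = (f ^ l) u ↔ (k : ZMod n) = l := by
    intro k l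
    rw [aux_per, ← hn, ZMod.intCast_eq_intCast_iff_dvd_sub, ← dvd_neg, neg_sub]
  have hone : (1 : ZMod n) ≠ 0 := by
    have : Fact (1 < n) := ⟨by omega⟩
    exact one_ne_zero
  have hs : ∀ k : ℤ, f ((f ^ k) u) = (f ^ (k + 1)) u := by
    intro k
    rw [add_comm, zpow_add, zpow_one, Equiv.Perm.mul_apply]
  have hc : ∀ k : ℤ, (f ^ k) u = (f ^ (((k : ZMod n)).cast : ℤ)) u := by
    intro k
    rw [hper, ZMod.intCast_cast, ZMod.cast_id]
  refine ⟨n, hn2, aux_iso Γ (cycGraph n) (fun i => (f ^ (i.cast : ℤ)) u) ?_ ?_ ?_ c 0 ?_ ?_⟩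
  · intro a b h
    simpa [hper] using h
  · intro a b
    simp only [hA, hs, hper, cycGraph, SimpleGraph.fromRel_adj]
    push_cast
    try simp only [ZMod.intCast_cast, ZMod.cast_id', ZMod.cast_id, id_eq]
    constructor
    · intro h
      refine ⟨?_, h⟩
      rintro rfl
      simp [hone] at h
    · exact fun h => h.2
  · intro a y h
    simp only [hA] at h
    rcases h with h | h
    · rw [hs] at h
      exact ⟨_, (h.trans (hc _)).symm⟩
    · refine ⟨(((a.cast : ℤ) - 1 : ℤ) : ZMod n), ?_⟩
      simp only
      rw [← hc]
      apply f.injective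
      rw [hs, ← h]
      simp
  · simpa using hu
  · have key : ∀ m : ℕ, Γ.Reachable u ((f ^ (m : ℤ)) u) := by
      intro m
      induction m with
      | zero => simp
      | succ m ih =>
        refine ih.trans (Adj.reachable ?_)
        rw [hA, hs]
        left; push_cast; rfl
    intro w
    have h := key w.val
    simp only [ZMod.cast_zero, zpow_zero, Equiv.Perm.one_apply]
    rw [hc] at h
    simpa using h

lemma aux_bip {V : Type} [Fintype V] (Γ : SimpleGraph V) (p : Equiv.Perm V) (u v : V)
    (hA : ∀ x y, Γ.Adj x y ↔ ∃ k : ℤ, (x = (p ^ k) u ∧ y = (p ^ k) v) ∨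
      (x = (p ^ k) v ∧ y = (p ^ k) u))
    (hno : ∀ k l : ℤ, (p ^ k) u ≠ (p ^ l) v) (c : Γ.ConnectedComponent) (hu : u ∈ c.supp) :
    ∃ s t : ℕ, 0 < s ∧ 0 < t ∧ Nat.gcd s t = 1 ∧
        Nonempty (Γ.induce c.supp ≃g completeBipartiteGraph (Fin s) (Fin t)) := by
  have hpos : ∀ x, 0 < Function.minimalPeriod p x := fun x =>
    Function.minimalPeriod_pos_of_mem_periodicPts
      (Function.Injective.mem_periodicPts p.injective x)
  have hpu := aux_per p u
  have hpv := aux_per p v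
  have h1 := hpos u
  have h2 := hpos v
  generalize Function.minimalPeriod p u = S at *
  generalize Function.minimalPeriod p v = T at *
  obtain ⟨s, t, hco, hS, hT⟩ := Nat.exists_coprime S T
  have hd : 0 < Nat.gcd S T := Nat.gcd_pos_of_pos_left _ h1
  generalize Nat.gcd S T = d at *
  subst hS hT
  have hs : 0 < s := Nat.pos_of_mul_pos_right h1
  have ht : 0 < t := Nat.pos_of_mul_pos_right h2
  have hd0 : (d : ℤ) ≠ 0 := by exact_mod_cast hd.ne'
  have hpu' : ∀ k l : ℤ, (p ^ (k * d)) u = (p ^ (l * d)) u ↔ (s : ℤ) ∣ k - l := by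
    intro k l
    rw [hpu, ← sub_mul]; push_cast
    exact mul_dvd_mul_iff_right hd0
  have hpv' : ∀ k l : ℤ, (p ^ (k * d)) v = (p ^ (l * d)) v ↔ (t : ℤ) ∣ k - l := by
    intro k l
    rw [hpv, ← sub_mul]; push_cast
    exact mul_dvd_mul_iff_right hd0
  have hfin : ∀ (r : ℕ), 0 < r → ∀ k : ℤ, ∃ i : Fin r, (r : ℤ) ∣ (i : ℕ) - k := by
    intro r hr k
    have hr' : (0:ℤ) < r := by exact_mod_cast hr
    refine ⟨⟨(k % r).toNat, ?_⟩, ?_⟩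
    · have := Int.emod_lt_of_pos k hr'
      have := Int.emod_nonneg k hr'.ne'
      omega
    · simp only
      rw [Int.toNat_of_nonneg (Int.emod_nonneg k hr'.ne')]
      exact ⟨-(k / r), by have := Int.emod_add_mul_ediv k r; linarith⟩
  have hfinj : ∀ (r : ℕ) (i j : Fin r), (r : ℤ) ∣ (i : ℕ) - ((j : ℕ) : ℤ) → i = j := by
    intro r i j h
    have := Int.eq_zero_of_abs_lt_dvd h (by rw [abs_lt]; constructor <;> omega)
    ext; omega
  have huv : ∀ i j : ℤ, Γ.Adj ((p ^ (i * d)) u) ((p ^ (j * d)) v) := by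
    intro i j
    obtain ⟨a, b, hab⟩ := Nat.isCoprime_iff_coprime.2 hco
    rw [hA]
    refine ⟨(i * (b * t) + j * (a * s)) * d, Or.inl ⟨?_, ?_⟩⟩
    · rw [hpu']
      exact ⟨a * (i - j), by linear_combination (-i) * hab⟩
    · rw [hpv']
      exact ⟨b * (j - i), by linear_combination (-j) * hab⟩
  have hdvd : ∀ (r : ℕ) (i k : ℤ), (((r * d : ℕ)) : ℤ) ∣ i * d - k → ∃ m : ℤ, k = m * d := by
    rintro r i k ⟨q, hq⟩
    push_cast at hq
    exact ⟨i - r * q, by linear_combination -hq⟩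
  let φ : Fin s ⊕ Fin t → V := Sum.elim (fun i => (p ^ (((i : ℕ) : ℤ) * d)) u)
    (fun i => (p ^ (((i : ℕ) : ℤ) * d)) v)
  refine ⟨s, t, hs, ht, hco, aux_iso Γ _ φ ?_ ?_ ?_ c (Sum.inl ⟨0, hs⟩) ?_ ?_⟩
  · rintro (i | i) (j | j) h
    · simp only [φ, Sum.elim_inl, hpu'] at h
      rw [hfinj _ _ _ h]
    · exact absurd h (hno _ _)
    · exact absurd h.symm (hno _ _)
    · simp only [φ, Sum.elim_inr, hpv'] at h
      rw [hfinj _ _ _ h]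
  · rintro (i | i) (j | j)
    · simp only [φ, Sum.elim_inl, completeBipartiteGraph_adj, hA]
      simp [hno]
    · simpa [φ] using huv i j
    · simpa [φ] using (huv j i).symm
    · simp only [φ, Sum.elim_inr, completeBipartiteGraph_adj, hA]
      simp [fun k l => (hno k l).symm]
  · rintro (i | i) y h
    · simp only [φ, Sum.elim_inl, hA] at h
      obtain ⟨k, ⟨h, rfl⟩ | ⟨h, rfl⟩⟩ := h
      · rw [hpu] at h
        obtain ⟨m, rfl⟩ := hdvd _ _ _ h
        obtain ⟨j, hj⟩ := hfin t ht m
        exact ⟨Sum.inr j, (hpv' _ _).2 hj⟩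
      · exact absurd h (hno _ _)
    · simp only [φ, Sum.elim_inr, hA] at h
      obtain ⟨k, ⟨h, rfl⟩ | ⟨h, rfl⟩⟩ := h
      · exact absurd h.symm (hno _ _)
      · rw [hpv] at h
        obtain ⟨m, rfl⟩ := hdvd _ _ _ h
        obtain ⟨j, hj⟩ := hfin s hs m
        exact ⟨Sum.inl j, (hpu' _ _).2 hj⟩
  · simpa [φ] using hu
  · rintro (i | i)
    · exact (huv _ 0).reachable.trans (huv _ 0).symm.reachable
    · exact (huv _ _).reachable

lemma aux_k2_cyc : Nonempty (cycGraph 2 ≃g SimpleGraph.completeGraph (Fin 2)) := by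
  refine ⟨⟨Equiv.refl (Fin 2), ?_⟩⟩
  intro a b
  change Fin 2 at a b
  show a ≠ b ↔ (a ≠ b ∧ (b = a + 1 ∨ a = b + 1))
  revert a b
  decide

lemma aux_k2_bip : Nonempty (completeBipartiteGraph (Fin 1) (Fin 1) ≃g
    SimpleGraph.completeGraph (Fin 2)) := by
  refine ⟨⟨finSumFinEquiv, ?_⟩⟩
  intro a b
  show finSumFinEquiv a ≠ finSumFinEquiv b ↔ _
  rw [completeBipartiteGraph_adj, Ne, EmbeddingLike.apply_eq_iff_eq]
  revert a b
  decide

theorem stmt1 {V : Type} [Fintype V] (Γ : SimpleGraph V)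
    (hniso : ∀ v : V, ∃ w : V, Γ.Adj v w)
    (g : Γ ≃g Γ)
    (htrans : ∀ e ∈ Γ.edgeSet, ∀ e' ∈ Γ.edgeSet, ∃ k : ℤ, Sym2.map ⇑(g ^ k) e = e') :
    (∀ c : Γ.ConnectedComponent,
      Nonempty (Γ.induce c.supp ≃g SimpleGraph.completeGraph (Fin 2)) ∨
      (∃ n : ℕ, 3 ≤ n ∧ Nonempty (Γ.induce c.supp ≃g cycGraph n)) ∨
      (∃ s t : ℕ, 1 < s * t ∧ Nat.gcd s t = 1 ∧
        Nonempty (Γ.induce c.supp ≃g completeBipartiteGraph (Fin s) (Fin t)))) ∧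
    (∀ c c' : Γ.ConnectedComponent,
      Nonempty (Γ.induce c.supp ≃g Γ.induce c'.supp)) := by
  constructor
  · intro c
    obtain ⟨u, hu⟩ := c.nonempty_supp
    obtain ⟨v, huv⟩ := hniso u
    set p : Equiv.Perm V := g.toEquiv with hp
    have hA : ∀ x y, Γ.Adj x y ↔ ∃ k : ℤ, (x = (p ^ k) u ∧ y = (p ^ k) v) ∨
        (x = (p ^ k) v ∧ y = (p ^ k) u) := by
      intro x y
      constructor
      · intro h
        obtain ⟨k, hk⟩ := htrans s(u, v) huv s(x, y) h
        rw [Sym2.map_mk, Sym2.eq_iff] at hk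
        simp only [aux_zpow] at hk
        refine ⟨k, ?_⟩
        rcases hk with ⟨h1, h2⟩ | ⟨h1, h2⟩
        · exact Or.inl ⟨h1.symm, h2.symm⟩
        · exact Or.inr ⟨h2.symm, h1.symm⟩
      · have hk : ∀ k : ℤ, Γ.Adj ((p ^ k) u) ((p ^ k) v) := by
          intro k
          rw [← aux_zpow, ← aux_zpow]
          exact (g ^ k).map_adj_iff.2 huv
        rintro ⟨k, ⟨rfl, rfl⟩ | ⟨rfl, rfl⟩⟩
        · exact hk k
        · exact (hk k).symm
    by_cases hcase : ∃ k l : ℤ, (p ^ k) u = (p ^ l) v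
    · obtain ⟨k, l, hkl⟩ := hcase
      have hv : v = (p ^ (k - l)) u := by
        rw [sub_eq_neg_add, zpow_add, Equiv.Perm.mul_apply, hkl, ← Equiv.Perm.mul_apply,
          ← zpow_add, neg_add_cancel, zpow_zero, Equiv.Perm.one_apply]
      have hsw : ∀ m : ℤ, (p ^ m) v = (p ^ (k - l)) ((p ^ m) u) := by
        intro m
        rw [hv, ← Equiv.Perm.mul_apply, ← Equiv.Perm.mul_apply, ← zpow_add, ← zpow_add, add_comm]
      have horb : ∀ x, ∃ m : ℤ, x = (p ^ m) u := by
        intro x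
        obtain ⟨y, hy⟩ := hniso x
        obtain ⟨m, ⟨h, _⟩ | ⟨h, _⟩⟩ := (hA x y).1 hy
        · exact ⟨m, h⟩
        · refine ⟨m + (k - l), ?_⟩
          rw [h, zpow_add, Equiv.Perm.mul_apply, ← hv]
      obtain ⟨n, hn, ⟨e⟩⟩ := aux_cyc Γ (p ^ (k - l)) (by
        intro x y
        rw [hA]
        constructor
        · rintro ⟨m, ⟨rfl, rfl⟩ | ⟨rfl, rfl⟩⟩
          · exact Or.inl (hsw m)
          · exact Or.inr (hsw m)
        · rintro (h | h)
          · obtain ⟨m, rfl⟩ := horb x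
            exact ⟨m, Or.inl ⟨rfl, h.trans (hsw m).symm⟩⟩
          · obtain ⟨m, rfl⟩ := horb y
            exact ⟨m, Or.inr ⟨h.trans (hsw m).symm, rfl⟩⟩) c
      rcases Nat.lt_or_ge n 3 with h | h
      · obtain rfl : n = 2 := by omega
        obtain ⟨e'⟩ := aux_k2_cyc
        exact Or.inl ⟨e.trans e'⟩
      · exact Or.inr (Or.inl ⟨n, h, ⟨e⟩⟩)
    · push Not at hcase
      obtain ⟨s, t, hs, ht, hg, ⟨e⟩⟩ := aux_bip Γ p u v hA hcase c hu
      by_cases h1 : 1 < s * t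
      · exact Or.inr (Or.inr ⟨s, t, h1, hg, ⟨e⟩⟩)
      · have hst : s * t = 1 := by
          have := Nat.mul_pos hs ht
          omega
        obtain ⟨rfl, rfl⟩ := mul_eq_one.1 hst
        obtain ⟨e'⟩ := aux_k2_bip
        exact Or.inl ⟨e.trans e'⟩
  · intro c c'
    obtain ⟨u, hu⟩ := c.nonempty_supp
    obtain ⟨v, huv⟩ := hniso u
    obtain ⟨u', hu'⟩ := c'.nonempty_supp
    obtain ⟨v', huv'⟩ := hniso u'
    obtain ⟨k, hk⟩ := htrans s(u, v) huv s(u', v') huv'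
    rw [ConnectedComponent.mem_supp_iff] at hu hu'
    have hr : Γ.Reachable ((g ^ k) u) u' := by
      rw [Sym2.map_mk, Sym2.eq_iff] at hk
      rcases hk with ⟨h1, h2⟩ | ⟨h1, h2⟩
      · rw [h1]
      · rw [h1]; exact huv'.symm.reachable
    have hmem : ∀ x, x ∈ c.supp ↔ (g ^ k) x ∈ c'.supp := by
      intro x
      rw [ConnectedComponent.mem_supp_iff, ConnectedComponent.mem_supp_iff, ← hu, ← hu',
        ← ConnectedComponent.sound hr]
      simp only [ConnectedComponent.eq]
      exact (g ^ k).reachable_iff.symm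
    exact ⟨⟨(g ^ k).toEquiv.subtypeEquiv hmem, fun {a b} => (g ^ k).map_adj_iff⟩⟩
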